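/- With the notation of the context, assume n_α·Y ⊆ Y_{Q,n}. For 1 ≤ i ≤ r − 1 let α_i denote the linear functional y ↦ y_i − y_{i+1} on ℤ^r, extended to ℚ-linear functionals. Then { x ∈ Σ_{i=1}^{r−1} ℚ·α_i : x(y) ∈ ℤ for all y ∈ Y_{Q,n} } = Σ_{i=1}^{r−1} ℤ·(α_i/n_α); that is, a rational linear combination Σ c_i α_i takes integer values on all of Y_{Q,n} if and only if n_α·c_i ∈ ℤ for every i. (This says X_{Q,n} ∩ X^{sc}_ℚ = X_{Q,n}^{sc}, i.e. the torsion subgroup Γ^{tor}_{G_{Q,n}} attached to such a cover of GL_r is trivial.) -/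

import Mathlib

/-- The symmetric bilinear form on `Y = ℤ^r` attached to an `n`-fold Brylinski–Deligne
cover of `GL_r`: `B(e_i, e_i) = 2𝐩` and `B(e_i, e_j) = 𝐪` for `i ≠ j`. -/
def BGL (r : ℕ) (p q : ℤ) (x y : Fin r → ℤ) : ℤ :=
  2 * p * (∑ i, x i * y i) + q * ((∑ i, x i) * (∑ i, y i) - ∑ i, x i * y i)

lemma BGL_add_left (r : ℕ) (p q : ℤ) (a b y : Fin r → ℤ) :
    BGL r p q (a + b) y = BGL r p q a y + BGL r p q b y := by
  simp only [BGL, Pi.add_apply, add_mul, Finset.sum_add_distrib]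
  ring

lemma BGL_neg_left (r : ℕ) (p q : ℤ) (a y : Fin r → ℤ) :
    BGL r p q (-a) y = -BGL r p q a y := by
  simp only [BGL, Pi.neg_apply, neg_mul, Finset.sum_neg_distrib]
  ring

/-- The lattice `Y_{Q,n} = {y ∈ Y : B(y, y') ∈ nℤ for all y' ∈ Y}`. -/
def YQnGL (r n : ℕ) (p q : ℤ) : AddSubgroup (Fin r → ℤ) where
  carrier := {y | ∀ y', (n : ℤ) ∣ BGL r p q y y'}
  zero_mem' := by
    intro y'
    simp [BGL]
  add_mem' := by
    intro a b ha hb y'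
    rw [BGL_add_left]
    exact dvd_add (ha y') (hb y')
  neg_mem' := by
    intro a ha y'
    rw [BGL_neg_left]
    exact dvd_neg.mpr (ha y')

/-- `n_α = n / gcd(n, Q(α^∨))` with `Q(α^∨) = 2𝐩 - 𝐪`. -/
def nAlpha (n : ℕ) (p q : ℤ) : ℕ := n / Int.gcd (n : ℤ) (2 * p - q)

/-- The coroot lattice `Y_0 = {y ∈ ℤ^r : y_1 + ⋯ + y_r = 0}` of `GL_r`. -/
def Y0GL (r : ℕ) : AddSubgroup (Fin r → ℤ) where
  carrier := {y | ∑ i, y i = 0}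
  zero_mem' := by simp
  add_mem' := by
    intro a b ha hb
    have ha' : ∑ i, a i = 0 := ha
    have hb' : ∑ i, b i = 0 := hb
    show ∑ i, (a + b) i = 0
    simp only [Pi.add_apply, Finset.sum_add_distrib, ha', hb', add_zero]
  neg_mem' := by
    intro a ha
    have ha' : ∑ i, a i = 0 := ha
    show ∑ i, (-a) i = 0
    simp only [Pi.neg_apply, Finset.sum_neg_distrib, ha', neg_zero]

/-- The lattice `Y_{0,Q,n} = {y ∈ Y_0 : B(y, y') ∈ nℤ for all y' ∈ Y_0}`. -/
def Y0QnGL (r n : ℕ) (p q : ℤ) : AddSubgroup (Fin r → ℤ) where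
  carrier := {y | (∑ i, y i = 0) ∧
      ∀ y' : Fin r → ℤ, (∑ i, y' i = 0) → (n : ℤ) ∣ BGL r p q y y'}
  zero_mem' := ⟨by simp, fun y' _ => by simp [BGL]⟩
  add_mem' := by
    rintro a b ⟨ha0, ha⟩ ⟨hb0, hb⟩
    refine ⟨?_, fun y' hy' => ?_⟩
    · simp only [Pi.add_apply, Finset.sum_add_distrib, ha0, hb0, add_zero]
    · rw [BGL_add_left]
      exact dvd_add (ha y' hy') (hb y' hy')
  neg_mem' := by
    rintro a ⟨ha0, ha⟩
    refine ⟨?_, fun y' hy' => ?_⟩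
    · simp only [Pi.neg_apply, Finset.sum_neg_distrib, ha0, neg_zero]
    · rw [BGL_neg_left]
      exact dvd_neg.mpr (ha y' hy')

/-!
Pairing `y` with the coroot `e_i - e_j` gives `B(y, e_i - e_j) = (2𝐩 - 𝐪)(y_i - y_j)`, so every
root takes values in `n_α ℤ` on `Y_{Q,n}`; hence `Σ c_i α_i` is integral there as soon as all
`n_α c_i` are. Conversely, the saturation hypothesis puts `n_α ω_i` into `Y_{Q,n}`, where
`ω_i = e_1 + ⋯ + e_i` is dual to `α_i`, and evaluating `Σ c_j α_j` at it returns `n_α c_i`.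
-/

section TypeARoots

variable {R : Type*} [CommRing R] {m : ℕ}

variable (R) in
/-- The simple root `α_i : y ↦ y_i - y_{i+1}` of `GL_{m+1}`, as a linear functional on the
cocharacters with coefficients in `R`; both indices are counted from `0`. -/
def simpleRoot (i : Fin m) : (Fin (m + 1) → R) →ₗ[R] R :=
  LinearMap.proj (R := R) (φ := fun _ => R) i.castSucc - LinearMap.proj i.succ

variable (R) in
/-- The fundamental coweight `ω_i = e_0 + ⋯ + e_i` of `GL_{m+1}`, used to read off the coefficient
of `α_i` in a combination of simple roots. Duality with the simple roots only fixes it up to a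
multiple of `(1, …, 1)`; this choice has last coordinate `0`. -/
def fundamentalCoweight (i : Fin m) : Fin (m + 1) → R :=
  fun j => if j ≤ i.castSucc then 1 else 0

lemma simpleRoot_apply (i : Fin m) (y : Fin (m + 1) → R) :
    simpleRoot R i y = y i.castSucc - y i.succ :=
  rfl

lemma simpleRoot_fundamentalCoweight (i j : Fin m) :
    simpleRoot R j (fundamentalCoweight R i) = if j = i then 1 else 0 := by
  simp only [simpleRoot_apply, fundamentalCoweight, Fin.castSucc_le_castSucc_iff,
    Fin.succ_le_castSucc_iff]
  rcases lt_trichotomy j i with h | rfl | h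
  · simp [h, h.le, h.ne]
  · simp
  · simp [h.not_ge, h.not_gt, h.ne']

variable {A : Type*} [AddCommGroup A] [Module R A]

lemma sum_simpleRoot_smul_fundamentalCoweight (a : R) (c : Fin m → A) (i : Fin m) :
    ∑ j, simpleRoot R j (a • fundamentalCoweight R i) • c j = a • c i := by
  simp [simpleRoot_fundamentalCoweight]

theorem forall_sum_simpleRoot_smul_mem_iff {L : Set (Fin (m + 1) → R)} {a : R}
    (hcoweight : ∀ i, a • fundamentalCoweight R i ∈ L)
    (hroot : ∀ y ∈ L, ∀ i, a ∣ simpleRoot R i y) (M : Submodule R A) (c : Fin m → A) :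
    (∀ y ∈ L, ∑ i, simpleRoot R i y • c i ∈ M) ↔ ∀ i, a • c i ∈ M := by
  constructor
  · intro h i
    rw [← sum_simpleRoot_smul_fundamentalCoweight a c i]
    exact h _ (hcoweight i)
  · intro h y hy
    refine M.sum_mem fun i _ => ?_
    obtain ⟨b, hb⟩ := hroot y hy i
    rw [hb, mul_comm, mul_smul]
    exact M.smul_mem b (h i)

end TypeARoots

lemma BGL_single_sub_single (r : ℕ) (p q : ℤ) (y : Fin r → ℤ) (i j : Fin r) :
    BGL r p q y (Pi.single i 1 - Pi.single j 1) = (2 * p - q) * (y i - y j) := by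
  simp only [BGL, Pi.sub_apply, mul_sub, Finset.sum_sub_distrib, Pi.single_apply,
    mul_ite, mul_one, mul_zero, Finset.sum_ite_eq', Finset.mem_univ, if_true]
  ring

lemma nAlpha_dvd_iff {n : ℕ} (hn : 0 < n) (p q a : ℤ) :
    (nAlpha n p q : ℤ) ∣ a ↔ (n : ℤ) ∣ (2 * p - q) * a := by
  have hgcd : (Int.gcd n (2 * p - q) : ℤ) ≠ 0 := by
    exact_mod_cast (Int.gcd_pos_of_ne_zero_left _ (by exact_mod_cast hn.ne')).ne'
  rw [nAlpha, Int.natCast_div, Int.ediv_dvd_iff_dvd_mul (Int.gcd_dvd_left _ _) hgcd,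
    Int.dvd_gcd_mul_iff_dvd_mul]

lemma nAlpha_dvd_sub_of_mem_YQnGL {r n : ℕ} (hn : 0 < n) {p q : ℤ} {y : Fin r → ℤ}
    (hy : y ∈ YQnGL r n p q) (i j : Fin r) : (nAlpha n p q : ℤ) ∣ y i - y j := by
  rw [nAlpha_dvd_iff hn, ← BGL_single_sub_single]
  exact hy _

theorem stmt16_general {m n : ℕ} (hn : 0 < n) {p q : ℤ}
    (hsat : ∀ y : Fin (m + 1) → ℤ, (nAlpha n p q : ℤ) • y ∈ YQnGL (m + 1) n p q)
    {A : Type*} [AddCommGroup A] (M : AddSubgroup A) (c : Fin m → A) :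
    (∀ y ∈ YQnGL (m + 1) n p q, ∑ i, simpleRoot ℤ i y • c i ∈ M) ↔
      ∀ i, (nAlpha n p q : ℤ) • c i ∈ M :=
  forall_sum_simpleRoot_smul_mem_iff (fun i => hsat (fundamentalCoweight ℤ i))
    (fun _ hy i => nAlpha_dvd_sub_of_mem_YQnGL hn hy i.castSucc i.succ) M.toIntSubmodule c

/-- Assume `n_α·Y ⊆ Y_{Q,n}`.  A rational linear combination
`Σ c_i α_i` of the simple roots `α_i(y) = y_i - y_{i+1}` takes integer values on all of
`Y_{Q,n}` if and only if `n_α·c_i ∈ ℤ` for every `i`; i.e.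
`X_{Q,n} ∩ X^{sc}_ℚ = X_{Q,n}^{sc}`, so the torsion subgroup `Γ^{tor}_{G_{Q,n}}`
attached to such a cover of `GL_r` is trivial. -/
theorem stmt16 (r n : ℕ) (hr : 2 ≤ r) (hn : 0 < n) (p q : ℤ)
    (hsat : ∀ y : Fin r → ℤ, ((nAlpha n p q : ℕ) : ℤ) • y ∈ YQnGL r n p q) :
    ∀ c : Fin (r - 1) → ℚ,
      (∀ y ∈ YQnGL r n p q, ∃ k : ℤ,
          (∑ i : Fin (r - 1),
            c i * ((y ⟨i.1, by have := i.2; omega⟩ - y ⟨i.1 + 1, by have := i.2; omega⟩ : ℤ) : ℚ))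
            = (k : ℚ))
        ↔ ∀ i : Fin (r - 1), ∃ k : ℤ, ((nAlpha n p q : ℕ) : ℚ) * c i = (k : ℚ) := by
  obtain ⟨m, rfl⟩ : ∃ m, r = m + 1 := ⟨r - 1, by omega⟩
  intro c
  change (∀ y ∈ YQnGL (m + 1) n p q, ∃ k : ℤ, ∑ i, c i * (simpleRoot ℤ i y : ℚ) = k) ↔
    ∀ i : Fin m, ∃ k : ℤ, (nAlpha n p q : ℚ) * c i = k
  simpa [AddSubgroup.mem_zmultiples_iff, mul_comm, eq_comm] using
    stmt16_general hn hsat (AddSubgroup.zmultiples (1 : ℚ)) c
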